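/- arXiv:1704.07111 — 3 statements merged into one kernel-verified Lean document; each statement's English description precedes it below -/
import Mathlib

section
/- Let G be a graph such that every connected component of G has only finitely many 2-edge-connected components. Then for every edge f of G, every connected component of G − f also has only finitely many 2-edge-connected components. -/
namespace SimpleGraph

variable {V : Type*}

/-- A graph is 2-edge-connected if it is connected and stays connected after deleting any
single edge. -/
def TwoEdgeConnected (G : SimpleGraph V) : Prop :=
  G.Connected ∧ ∀ e ∈ G.edgeSet, (G.deleteEdges {e}).Connected

end SimpleGraph

namespace SimpleGraph

variable {V : Type*}

/-- `S` is the vertex set of a 2-edge-connected component (i.e. a maximal 2-edge-connected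
subgraph) of `G`. -/
def IsTwoEdgeConnectedComponent (G : SimpleGraph V) (S : Set V) : Prop :=
  (G.induce S).TwoEdgeConnected ∧
    ∀ S' : Set V, S ⊆ S' → (G.induce S').TwoEdgeConnected → S' = S

end SimpleGraph

/-!
Let `H = G − F` with `F` finite, and let `A` be the finite set of endpoints of the edges in `F`.
Suppose `u` and `v` lie in the same component of `H` and in the same 2-edge-connected component of
`G`, but an edge `e` separates them in `H`. A path from `u` to `v` in `G − e` must use an edge of
`F`, so in `H − e` the vertex `u` reaches some `a ∈ A` and `v` reaches some `b ∈ A`. Hence `e`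
separates `a` from `b` in `H`, and `e` lies on any fixed `H`-path between them. Only finitely many
edges `e` arise in this way, and so the 2-edge-connected component of `u` in `H` is determined by
its component and its 2-edge-connected component in `G` together with one of finitely many possible
values of the set of pairs `(e, a)` such that `u` reaches `a` in `H − e`.
-/

section

open SimpleGraph

variable {V W : Type*} {G : SimpleGraph V} {G' : SimpleGraph W} {S : Set V} {u v : V}

theorem finite_image_of_forall_eq_imp_eq {α β γ : Type*} {f : α → β} {g : α → γ} {s : Set α}
    (hg : (g '' s).Finite) (hfg : ∀ a ∈ s, ∀ b ∈ s, g a = g b → f a = f b) :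
    (f '' s).Finite := by
  rcases s.eq_empty_or_nonempty with rfl | ⟨c, -⟩
  · simp
  have : Nonempty α := ⟨c⟩
  refine (hg.image (f ∘ Function.invFunOn g s)).subset ?_
  rintro _ ⟨a, ha, rfl⟩
  have hga : ∃ b ∈ s, g b = g a := ⟨a, ha, rfl⟩
  exact ⟨g a, ⟨a, ha, rfl⟩,
    hfg _ (Function.invFunOn_mem hga) a ha (Function.invFunOn_eq hga)⟩

theorem isEdgeReachable_map_of_injective {k : ℕ} (φ : G →g G') (hφ : Function.Injective φ)
    (h : G.IsEdgeReachable k u v) : G'.IsEdgeReachable k (φ u) (φ v) := by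
  intro s hs
  have hcard : (Sym2.map φ ⁻¹' s).encard ≤ s.encard := by
    rw [← (Sym2.map.injective hφ).encard_image]
    exact Set.encard_le_encard (Set.image_preimage_subset _ _)
  refine (h (hcard.trans_lt hs)).map (G' := G'.deleteEdges s) ⟨φ, fun {a b} hab ↦ ?_⟩
  rw [deleteEdges_adj] at hab ⊢
  exact ⟨φ.map_adj hab.1, hab.2⟩

theorem twoEdgeConnected_iff_isEdgeConnected_two :
    G.TwoEdgeConnected ↔ Nonempty V ∧ G.IsEdgeConnected 2 := by
  rw [isEdgeConnected_two]
  constructor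
  · rintro ⟨hconn, hdel⟩
    refine ⟨hconn.nonempty, fun e ↦ ?_⟩
    by_cases he : e ∈ G.edgeSet
    · exact (hdel e he).preconnected
    · rw [deleteEdges_eq_self.2 (Set.disjoint_singleton_right.2 he)]
      exact hconn.preconnected
  · rintro ⟨hne, hdel⟩
    exact ⟨(isEdgeConnected_two.2 hdel).connected two_ne_zero, fun e _ ↦ ⟨hdel e⟩⟩

/-- The class of `u` under 2-edge-reachability. These classes are exactly the vertex sets of the
2-edge-connected components of `G`. -/
def twoEdgeClass (G : SimpleGraph V) (u : V) : Set V :=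
  {v | G.IsEdgeReachable 2 u v}

theorem mem_twoEdgeClass_self (G : SimpleGraph V) (u : V) : u ∈ twoEdgeClass G u :=
  IsEdgeReachable.refl u

theorem twoEdgeClass_eq_iff : twoEdgeClass G u = twoEdgeClass G v ↔ G.IsEdgeReachable 2 u v := by
  refine ⟨fun h ↦ ?_, fun h ↦ Set.ext fun w ↦ ⟨h.symm.trans, h.trans⟩⟩
  exact (h ▸ mem_twoEdgeClass_self G v : v ∈ twoEdgeClass G u)

theorem isEdgeConnected_two_induce_twoEdgeClass (G : SimpleGraph V) (u : V) :
    (G.induce (twoEdgeClass G u)).IsEdgeConnected 2 := by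
  refine isEdgeConnected_two.2 fun e a b ↦ ?_
  have hab : G.IsEdgeReachable 2 a b := a.2.symm.trans b.2
  obtain ⟨p, hp⟩ := (isEdgeReachable_two.1 hab (e.map Subtype.val)).exists_isPath
  have hsupp : ∀ w ∈ p.support, w ∈ twoEdgeClass G u := fun w hw ↦ by
    have hpG := ((Walk.isPath_mapLe (deleteEdges_le _)).2 hp).isTrail
    exact a.2.trans (hpG.isEdgeReachable_two_of_isEdgeReachable_two hab
      (Walk.start_mem_support _) (by simpa using hw))
  refine (p.induce _ hsupp).reachable.mono fun c d hcd ↦ ?_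
  rw [comap_adj, deleteEdges_adj] at hcd
  exact deleteEdges_adj.2 ⟨hcd.1, fun he ↦ hcd.2 (congrArg (Sym2.map Subtype.val) he)⟩

theorem twoEdgeConnected_induce_twoEdgeClass (G : SimpleGraph V) (u : V) :
    (G.induce (twoEdgeClass G u)).TwoEdgeConnected :=
  twoEdgeConnected_iff_isEdgeConnected_two.2
    ⟨⟨u, mem_twoEdgeClass_self G u⟩, isEdgeConnected_two_induce_twoEdgeClass G u⟩

theorem subset_twoEdgeClass_of_twoEdgeConnected (hS : (G.induce S).TwoEdgeConnected)
    (hu : u ∈ S) : S ⊆ twoEdgeClass G u := fun v hv ↦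
  isEdgeReachable_map_of_injective (Embedding.induce S).toHom Subtype.val_injective
    ((twoEdgeConnected_iff_isEdgeConnected_two.1 hS).2 ⟨u, hu⟩ ⟨v, hv⟩)

theorem isTwoEdgeConnectedComponent_iff :
    G.IsTwoEdgeConnectedComponent S ↔ ∃ u, twoEdgeClass G u = S := by
  constructor
  · rintro ⟨hS, hmax⟩
    obtain ⟨u, hu⟩ := hS.1.nonempty
    exact ⟨u, hmax _ (subset_twoEdgeClass_of_twoEdgeConnected hS hu)
      (twoEdgeConnected_induce_twoEdgeClass G u)⟩
  · rintro ⟨u, rfl⟩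
    exact ⟨twoEdgeConnected_induce_twoEdgeClass G u, fun S' hsub hS' ↦
      (subset_twoEdgeClass_of_twoEdgeConnected hS'
        (hsub (mem_twoEdgeClass_self G u))).antisymm hsub⟩

theorem twoEdgeClass_subset_supp_iff {C : G.ConnectedComponent} :
    twoEdgeClass G u ⊆ C.supp ↔ u ∈ C.supp := by
  refine ⟨fun h ↦ h (mem_twoEdgeClass_self G u), fun hu v hv ↦ ?_⟩
  have huv : G.Reachable u v := IsEdgeReachable.reachable two_ne_zero hv
  exact (ConnectedComponent.sound huv.symm).trans hu

theorem setOf_isTwoEdgeConnectedComponent_subset_supp (C : G.ConnectedComponent) :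
    {S | G.IsTwoEdgeConnectedComponent S ∧ S ⊆ C.supp} = twoEdgeClass G '' C.supp := by
  ext S
  rw [Set.mem_ofPred_eq, isTwoEdgeConnectedComponent_iff]
  constructor
  · rintro ⟨⟨u, rfl⟩, hsub⟩
    exact ⟨u, twoEdgeClass_subset_supp_iff.1 hsub, rfl⟩
  · rintro ⟨u, hu, rfl⟩
    exact ⟨⟨u, rfl⟩, twoEdgeClass_subset_supp_iff.2 hu⟩

/-- The vertices incident to an edge of `F`. -/
def edgeEndpoints (F : Set (Sym2 V)) : Set V :=
  ⋃ e ∈ F, (e : Set V)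

theorem finite_edgeEndpoints {F : Set (Sym2 V)} (hF : F.Finite) : (edgeEndpoints F).Finite :=
  hF.biUnion fun e _ ↦ e.ind fun a b ↦ by simp

theorem reachable_deleteEdges_or_exists_mem_edgeEndpoints (F : Set (Sym2 V))
    (h : G.Reachable u v) :
    (G.deleteEdges F).Reachable u v ∨ ∃ a ∈ edgeEndpoints F, (G.deleteEdges F).Reachable u a := by
  obtain ⟨p⟩ := h
  induction p with
  | nil => exact .inl .rfl
  | @cons u w v huw _ ih =>
    by_cases hF : s(u, w) ∈ F
    · exact .inr ⟨u, Set.mem_biUnion hF (Sym2.mem_mk_left u w), .rfl⟩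
    · have huw' : (G.deleteEdges F).Reachable u w := (deleteEdges_adj.2 ⟨huw, hF⟩).reachable
      exact ih.imp huw'.trans fun ⟨a, ha, hwa⟩ ↦ ⟨a, ha, huw'.trans hwa⟩

/-- The edges of `H` whose deletion separates two vertices of `A` lying in a common component
of `H`. -/
def separatingEdges (H : SimpleGraph V) (A : Set V) : Set (Sym2 V) :=
  {e | ∃ a ∈ A, ∃ b ∈ A, H.Reachable a b ∧ ¬ (H.deleteEdges {e}).Reachable a b}

theorem finite_setOf_not_reachable_deleteEdges_singleton (h : G.Reachable u v) :
    {e | ¬ (G.deleteEdges {e}).Reachable u v}.Finite := by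
  obtain ⟨p⟩ := h
  exact p.edges.finite_toSet.subset fun _ he ↦ p.mem_edges_of_not_reachable_deleteEdges he

theorem finite_separatingEdges (H : SimpleGraph V) {A : Set V} (hA : A.Finite) :
    (separatingEdges H A).Finite := by
  have hpair (a b : V) :
      {e | H.Reachable a b ∧ ¬ (H.deleteEdges {e}).Reachable a b}.Finite := by
    by_cases hab : H.Reachable a b
    · exact (finite_setOf_not_reachable_deleteEdges_singleton hab).subset fun _ he ↦ he.2
    · simp [hab]
  refine (hA.biUnion fun a _ ↦ hA.biUnion fun b _ ↦ hpair a b).subset ?_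
  rintro e ⟨a, ha, b, hb, he⟩
  exact Set.mem_biUnion ha (Set.mem_biUnion hb he)

/-- The trace of `u` on `A`: which vertices of `A` remain reachable from `u` after the deletion of
each edge separating two vertices of `A`, encoded as a set of pairs `(e, a)`. -/
def separationTrace (H : SimpleGraph V) (A : Set V) (u : V) : Set (Sym2 V × V) :=
  {x ∈ separatingEdges H A ×ˢ A | (H.deleteEdges {x.1}).Reachable u x.2}

theorem isEdgeReachable_two_deleteEdges_of_separationTrace_eq {F : Set (Sym2 V)}
    (huv : (G.deleteEdges F).Reachable u v) (hG : G.IsEdgeReachable 2 u v)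
    (htrace : separationTrace (G.deleteEdges F) (edgeEndpoints F) u =
      separationTrace (G.deleteEdges F) (edgeEndpoints F) v) :
    (G.deleteEdges F).IsEdgeReachable 2 u v := by
  set H := G.deleteEdges F with hH
  refine isEdgeReachable_two.2 fun e ↦ by_contra fun hsep ↦ ?_
  have hcomm : (G.deleteEdges {e}).deleteEdges F = H.deleteEdges {e} := by
    rw [hH, deleteEdges_deleteEdges, deleteEdges_deleteEdges, Set.union_comm]
  have hGe : (G.deleteEdges {e}).Reachable u v := isEdgeReachable_two.1 hG e
  obtain ⟨a, ha, hua⟩ : ∃ a ∈ edgeEndpoints F, (H.deleteEdges {e}).Reachable u a :=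
    hcomm ▸ (reachable_deleteEdges_or_exists_mem_edgeEndpoints F hGe).resolve_left
      (hcomm ▸ hsep)
  obtain ⟨b, hb, hvb⟩ : ∃ b ∈ edgeEndpoints F, (H.deleteEdges {e}).Reachable v b :=
    hcomm ▸ (reachable_deleteEdges_or_exists_mem_edgeEndpoints F hGe.symm).resolve_left
      (hcomm ▸ fun hvu ↦ hsep hvu.symm)
  have he : e ∈ separatingEdges H (edgeEndpoints F) := by
    have hle : H.deleteEdges {e} ≤ H := deleteEdges_le _
    exact ⟨a, ha, b, hb, (hua.mono hle).symm.trans (huv.trans (hvb.mono hle)),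
      fun hab ↦ hsep (hua.trans (hab.trans hvb.symm))⟩
  have hva : (e, a) ∈ separationTrace H (edgeEndpoints F) v := htrace ▸ ⟨⟨he, ha⟩, hua⟩
  exact hsep (hua.trans hva.2.symm)

theorem finite_image_twoEdgeClass_deleteEdges {F : Set (Sym2 V)} (hF : F.Finite)
    (C : (G.deleteEdges F).ConnectedComponent) (hC : (twoEdgeClass G '' C.supp).Finite) :
    (twoEdgeClass (G.deleteEdges F) '' C.supp).Finite := by
  let H := G.deleteEdges F
  let A := edgeEndpoints F
  have hA : A.Finite := finite_edgeEndpoints hF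
  have htraces : (𝒫 (separatingEdges H A ×ˢ A)).Finite :=
    ((finite_separatingEdges H hA).prod hA).finite_subsets
  refine finite_image_of_forall_eq_imp_eq
    (g := fun u ↦ (twoEdgeClass G u, separationTrace H A u)) ?_ fun u hu v hv huv ↦ ?_
  · refine (hC.prod htraces).subset ?_
    rintro _ ⟨u, hu, rfl⟩
    exact ⟨⟨u, hu, rfl⟩, Set.sep_subset _ _⟩
  · obtain ⟨hclass, htrace⟩ := Prod.mk.inj huv
    exact twoEdgeClass_eq_iff.2 (isEdgeReachable_two_deleteEdges_of_separationTrace_eq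
      (C.reachable_of_mem_supp hu hv) (twoEdgeClass_eq_iff.1 hclass) htrace)

theorem finitely_many_2ecc_deleteEdge_general {F : Set (Sym2 V)} (hF : F.Finite)
    (C : (G.deleteEdges F).ConnectedComponent)
    (h : {S | G.IsTwoEdgeConnectedComponent S ∧
      S ⊆ (C.map (Hom.ofLE (G.deleteEdges_le F))).supp}.Finite) :
    {S | (G.deleteEdges F).IsTwoEdgeConnectedComponent S ∧ S ⊆ C.supp}.Finite := by
  rw [setOf_isTwoEdgeConnectedComponent_subset_supp] at h ⊢
  have hsupp : C.supp ⊆ (C.map (Hom.ofLE (G.deleteEdges_le F))).supp := by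
    rintro u rfl
    rfl
  exact finite_image_twoEdgeClass_deleteEdges hF C (h.subset (Set.image_mono hsupp))

end

/-- If every connected component of `G` has only finitely many 2-edge-connected components,
then for every edge `f` of `G`, every connected component of `G − f` has only finitely many
2-edge-connected components. -/
theorem finitely_many_2ecc_deleteEdge {V : Type*} (G : SimpleGraph V)
    (h : ∀ C : G.ConnectedComponent,
      {S : Set V | G.IsTwoEdgeConnectedComponent S ∧ S ⊆ C.supp}.Finite)
    (f : Sym2 V) (hf : f ∈ G.edgeSet) :
    ∀ C : (G.deleteEdges {f}).ConnectedComponent,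
      {S : Set V | (G.deleteEdges {f}).IsTwoEdgeConnectedComponent S ∧ S ⊆ C.supp}.Finite := by
  intro C
  exact finitely_many_2ecc_deleteEdge_general (Set.finite_singleton f) C (h _)
end

section
/- Let H be a graph with a distinguished vertex z such that every connected component of H − z is 2-edge-connected, and every connected component of H − z is joined to z in H by either zero or infinitely many edges. Then there is a partition of the edge set E(H) into countable sets E_i (i ∈ I) such that for every i ∈ I, the spanning subgraph H_i = (V(H), E_i) has the same property: every connected component of H_i − z is 2-edge-connected, and every connected component of H_i − z is joined to z in H_i by either zero or infinitely many edges. -/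
namespace SimpleGraph

variable {V : Type*}

/-- The vertex set (inside `V`) of a connected component `C` of `G − U`. -/
def compSet (G : SimpleGraph V) (U : Set V)
    (C : (G.induce (Uᶜ : Set V)).ConnectedComponent) : Set V :=
  Subtype.val '' C.supp

/-- The connected component `C` of `G − U` is joined to `U` by exactly one edge of `G`. -/
def JoinedByExactlyOneEdge (G : SimpleGraph V) (U : Set V)
    (C : (G.induce (Uᶜ : Set V)).ConnectedComponent) : Prop :=
  ∃! e : Sym2 V, e ∈ G.edgeSet ∧ ∃ x ∈ G.compSet U C, ∃ y ∈ U, e = s(x, y)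

end SimpleGraph

namespace SimpleGraph

variable {V : Type*}

/-- Every connected component of `H − z` is 2-edge-connected, and each such component is
joined to `z` in `H` by either zero or infinitely many edges. -/
def GoodAtZ (H : SimpleGraph V) (z : V) : Prop :=
  ∀ C : (H.induce (({z} : Set V)ᶜ : Set V)).ConnectedComponent,
    (H.induce (H.compSet {z} C)).TwoEdgeConnected ∧
    ({e : Sym2 V | e ∈ H.edgeSet ∧ ∃ x ∈ H.compSet {z} C, e = s(x, z)} = ∅ ∨
     {e : Sym2 V | e ∈ H.edgeSet ∧ ∃ x ∈ H.compSet {z} C, e = s(x, z)}.Infinite)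

end SimpleGraph

/-!
An edge set `F` has the property in question exactly when, for each edge `xy` of `F` with `x ≠ z`,
after deleting `xy` and finitely many edges at `z` there is still a walk in `F` from `x` to `y` that
does not pass through `z`. Call such sets good. Unions of good sets are good, and every edge of a
good set lies in a countable good subset, so by induction on the cardinality it suffices to
decompose an uncountable good set `F` into smaller good sets.

Exhaust `F` by an increasing transfinite chain. With `N` the union of the stages before stage `α`,
stage `α` has at most `max ℵ₀ |α|` edges and contains a countable good subset of `F \ N` around each
of its edges outside `N`, so that what it adds to `N` is good. Moreover `N` contains a minimum cut
of `F` between any two vertices incident with `N` (the second of which may be `z`) as soon as that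
cut has at most `max ℵ₀ |α|` edges. This makes `F \ N` good, as the countable subsets require.
Indeed, let `xy` be an edge of `F \ N` and `L` a finite set to be avoided, and suppose that a walk
from `x` to `y` in `F \ L` uses `N`. Let `u` and `w` be its first and last vertices on an edge of
`N`, or `w = z` if `y = z`. Through `xy`, they are connected in `F \ N`. If `L` separated them in
`F \ N`, then `N ∪ L` would separate them in `F`, so their minimum cut would be small, hence
contained in `N`, and they would not be connected in `F \ N`. So the walk from `x` to `u` extends
to `w`, and on to `y`, inside `(F \ N) \ L`.
-/

open Cardinal Ordinal Set

universe u

section FinitaryClosure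

variable {E : Type u}

/-- The sets that contain `D A` for each of their finite subsets `A`. -/
def ClosedUnder (D : Finset E → Set E) (S : Set E) : Prop :=
  ∀ A : Finset E, ↑A ⊆ S → D A ⊆ S

/-- The closure operator whose closed sets are those closed under the set-valued finitary
operation `D`; it plays the role of a Skolem hull. -/
def finitaryClosure (D : Finset E → Set E) : ClosureOperator (Set E) :=
  .ofCompletePred (ClosedUnder D) fun _ h A hA =>
    subset_sInter fun S hS => h S hS A (hA.trans (sInter_subset_of_mem hS))

/-- One round of adjoining to `S` the values of `D` at its finite subsets. -/
def finitaryStep (D : Finset E → Set E) (S : Set E) : Set E :=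
  S ∪ ⋃ A : Finset S, D (A.map (Function.Embedding.subtype _))

variable {D : Finset E → Set E} {X S : Set E}

theorem closedUnder_finitaryClosure (D : Finset E → Set E) (X : Set E) :
    ClosedUnder D (finitaryClosure D X) :=
  (finitaryClosure D).isClosed_closure X

theorem finitaryClosure_min (hX : X ⊆ S) (hS : ClosedUnder D S) : finitaryClosure D X ⊆ S :=
  ClosureOperator.closure_min hX hS

theorem closedUnder_iUnion_iterate_finitaryStep (D : Finset E → Set E) (X : Set E) :
    ClosedUnder D (⋃ n, (finitaryStep D)^[n] X) := by
  classical
  have hmono : Monotone fun n => (finitaryStep D)^[n] X := monotone_nat_of_le_succ fun n => by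
    rw [Function.iterate_succ_apply']
    exact subset_union_left
  intro A hA
  obtain ⟨n, hn⟩ := hmono.directed_le.exists_mem_subset_of_finset_subset_biUnion hA
  refine subset_iUnion_of_subset (n + 1) ?_
  rw [Function.iterate_succ_apply']
  refine subset_union_of_subset_right (subset_iUnion_of_subset (A.subtype (· ∈ _)) ?_) _
  rw [Finset.subtype_map_of_mem hn]

theorem mk_finset_le {α : Type u} {μ : Cardinal.{u}} (hμ : ℵ₀ ≤ μ) (hα : #α ≤ μ) :
    #(Finset α) ≤ μ := by
  cases finite_or_infinite α
  · exact (lt_aleph0_of_finite _).le.trans hμ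
  · rwa [mk_finset_of_infinite]

theorem mk_finitaryStep_le {μ : Cardinal.{u}} (hμ : ℵ₀ ≤ μ) (hS : #S ≤ μ)
    (hD : ∀ A, #(D A) ≤ μ) : #(finitaryStep D S) ≤ μ :=
  (mk_union_le _ _).trans <| add_le_of_le hμ hS <|
    (mk_iUnion_le _).trans <| mul_le_of_le hμ (mk_finset_le hμ hS) <| ciSup_le' fun _ => hD _

theorem mk_finitaryClosure_le {μ : Cardinal.{u}} (hμ : ℵ₀ ≤ μ) (hX : #X ≤ μ)
    (hD : ∀ A, #(D A) ≤ μ) : #(finitaryClosure D X) ≤ μ := by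
  have hiter (n : ℕ) : #((finitaryStep D)^[n] X) ≤ μ := by
    induction n with
    | zero => exact hX
    | succ n ih =>
      rw [Function.iterate_succ_apply']
      exact mk_finitaryStep_le hμ ih hD
  have hunion := mk_iUnion_le_lift fun n => (finitaryStep D)^[n] X
  simp only [mk_nat, lift_aleph0, Cardinal.lift_uzero] at hunion
  refine (mk_le_mk_of_subset (finitaryClosure_min (subset_iUnion _ 0)
    (closedUnder_iUnion_iterate_finitaryStep D X))).trans ?_
  exact hunion.trans (mul_le_of_le hμ hμ (ciSup_le' hiter))

end FinitaryClosure

section InitialSegment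

variable {E : Type u}

theorem exists_injOn_lt_ord (K : Set E) :
    ∃ ρ : E → Ordinal.{u}, InjOn ρ K ∧ ∀ e ∈ K, ρ e < (#K).ord := by
  obtain ⟨r, _, hr⟩ := exists_ord_eq K
  have hρ (e : K) : Function.extend Subtype.val (typein r) 0 e.1 = typein r e :=
    Subtype.val_injective.extend_apply _ _ e
  refine ⟨Function.extend Subtype.val (typein r) 0, fun a ha b hb hab => ?_, fun e he => ?_⟩
  · rw [hρ ⟨a, ha⟩, hρ ⟨b, hb⟩] at hab
    exact congrArg Subtype.val (typein_injective r hab)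
  · rw [hρ ⟨e, he⟩, hr]
    exact typein_lt_type r _

/-- The position of an element of `K` in a fixed enumeration of `K` along the initial ordinal of
its cardinality; meaningful only on `K`. -/
noncomputable def enumRank (K : Set E) : E → Ordinal.{u} :=
  (exists_injOn_lt_ord K).choose

/-- The elements of `K` enumerated before position `o`. -/
def initialSegment (K : Set E) (o : Ordinal.{u}) : Set E :=
  {e ∈ K | enumRank K e < o}

theorem enumRank_injOn (K : Set E) : InjOn (enumRank K) K :=
  (exists_injOn_lt_ord K).choose_spec.1

theorem enumRank_lt_ord {K : Set E} {e : E} (he : e ∈ K) : enumRank K e < (#K).ord :=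
  (exists_injOn_lt_ord K).choose_spec.2 e he

theorem initialSegment_subset (K : Set E) (o : Ordinal.{u}) : initialSegment K o ⊆ K :=
  sep_subset _ _

theorem mk_initialSegment_le (K : Set E) (o : Ordinal.{u}) : #(initialSegment K o) ≤ o.card := by
  have h := lift_mk_le_lift_mk_of_injective
    (f := fun e : initialSegment K o => (⟨enumRank K e, e.2.2⟩ : Iio o))
    fun a b hab => Subtype.ext (enumRank_injOn K a.2.1 b.2.1 (Subtype.mk.inj hab))
  simpa only [Cardinal.mk_Iio_ordinal, Cardinal.lift_lift, Cardinal.lift_le] using h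

theorem card_max_omega0_add_one_le (o : Ordinal.{u}) :
    (max ω (o + 1)).card ≤ max ℵ₀ o.card := by
  rcases max_choice ω (o + 1) with h | h <;> rw [h]
  · rw [card_omega0]
    exact le_max_left _ _
  · rw [card_add_one]
    exact add_le_of_le (le_max_left _ _) (le_max_right _ _)
      (one_le_aleph0.trans (le_max_left _ _))

theorem mk_initialSegment_max_omega0_le (K : Set E) (o : Ordinal.{u}) :
    #(initialSegment K (max ω (o + 1))) ≤ max ℵ₀ o.card :=
  (mk_initialSegment_le K _).trans (card_max_omega0_add_one_le o)

theorem enumRank_lt_max_omega0 {K : Set E} {o : Ordinal.{u}} (hK : #K ≤ max ℵ₀ o.card) {e : E}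
    (he : e ∈ K) : enumRank K e < max ω o := by
  refine (enumRank_lt_ord he).trans_le (ord_le.2 (hK.trans (max_le ?_ ?_)))
  · rw [← card_omega0]
    exact card_le_card (le_max_left _ _)
  · exact card_le_card (le_max_right _ _)

end InitialSegment

/-- The input of the transfinite construction: a ground set to be exhausted, a set `cut i` for each
index `i` (in the application, a smallest set destroying a connection named by `i`), countably many
indices attached to each pair of elements, and, for each set `N` that has been removed from the
ground set, a countable set `witness N e` that must stay together with `e`. -/
structure CutSystem (E ι : Type u) where
  ground : Set E
  cut : ι → Set E
  cut_subset : ∀ i, cut i ⊆ ground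
  indices : E → E → Set ι
  countable_indices : ∀ a b, (indices a b).Countable
  witness : Set E → E → Set E
  witness_subset : ∀ N e, witness N e ⊆ ground
  countable_witness : ∀ N e, (witness N e).Countable

namespace CutSystem

variable {E ι : Type u} (S : CutSystem E ι) {α β : Ordinal.{u}}

/-- The indices attached to pairs of elements of `N`. -/
def indicesOn (N : Set E) : Set ι :=
  ⋃ a ∈ N, ⋃ b ∈ N, S.indices a b

theorem countable_indicesOn {N : Set E} (hN : N.Countable) : (S.indicesOn N).Countable :=
  hN.biUnion fun a _ => hN.biUnion fun b _ => S.countable_indices a b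

/-- The operation under which stage `α` is closed, where `N` is the union of the earlier stages.
Cuts enter gradually, so that stage `α` has at most `max ℵ₀ |α|` elements although a cut of an
index attached to it may be larger. -/
def operation (α : Ordinal.{u}) (N : Set E) (A : Finset E) : Set E :=
  (⋃ e ∈ A, S.witness N e) ∪ ⋃ i ∈ S.indicesOn A, initialSegment (S.cut i) (max ω (α + 1))

/-- The `α`-th member of the increasing chain that exhausts the ground set. -/
noncomputable def stage (α : Ordinal.{u}) : Set E :=
  finitaryClosure (S.operation α (⋃ β < α, stage β))
    ((⋃ β < α, stage β) ∪ initialSegment S.ground (max ω (α + 1)))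
termination_by α

/-- The union of the stages before `α`. -/
def below (α : Ordinal.{u}) : Set E :=
  ⋃ β < α, S.stage β

/-- The elements that appear for the first time at stage `α`. -/
def layer (α : Ordinal.{u}) : Set E :=
  S.stage α \ S.below α

theorem stage_eq (α : Ordinal.{u}) :
    S.stage α = finitaryClosure (S.operation α (S.below α))
      (S.below α ∪ initialSegment S.ground (max ω (α + 1))) := by
  rw [stage, below]

theorem operation_subset_stage {A : Finset E} (hA : ↑A ⊆ S.stage α) :
    S.operation α (S.below α) A ⊆ S.stage α := by
  rw [stage_eq] at hA ⊢
  exact closedUnder_finitaryClosure _ _ A hA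

theorem below_union_initialSegment_subset_stage (α : Ordinal.{u}) :
    S.below α ∪ initialSegment S.ground (max ω (α + 1)) ⊆ S.stage α := by
  rw [stage_eq]
  exact (finitaryClosure _).le_closure _

theorem below_subset_stage (α : Ordinal.{u}) : S.below α ⊆ S.stage α :=
  subset_union_left.trans (S.below_union_initialSegment_subset_stage α)

theorem stage_subset_below (h : β < α) : S.stage β ⊆ S.below α :=
  subset_biUnion_of_mem (u := S.stage) (mem_Iio.2 h)

theorem stage_mono : Monotone S.stage := fun _ _ h =>
  h.eq_or_lt.elim (fun h => h ▸ subset_rfl) fun h =>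
    (S.stage_subset_below h).trans (S.below_subset_stage _)

theorem operation_subset_ground (α : Ordinal.{u}) (N : Set E) (A : Finset E) :
    S.operation α N A ⊆ S.ground :=
  union_subset (iUnion₂_subset fun e _ => S.witness_subset N e)
    (iUnion₂_subset fun i _ => (initialSegment_subset _ _).trans (S.cut_subset i))

theorem stage_subset_ground (α : Ordinal.{u}) : S.stage α ⊆ S.ground := by
  induction α using WellFoundedLT.induction with
  | ind α ih =>
    rw [stage_eq]
    exact finitaryClosure_min (union_subset (iUnion₂_subset ih) (initialSegment_subset _ _))
      fun A _ => S.operation_subset_ground _ _ A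

theorem below_subset_ground (α : Ordinal.{u}) : S.below α ⊆ S.ground :=
  (S.below_subset_stage α).trans (S.stage_subset_ground α)

theorem mk_operation_le (α : Ordinal.{u}) (N : Set E) (A : Finset E) :
    #(S.operation α N A) ≤ max ℵ₀ α.card := by
  have hω : ℵ₀ ≤ max ℵ₀ α.card := le_max_left _ _
  have hwitness : (⋃ e ∈ A, S.witness N e).Countable :=
    A.countable_toSet.biUnion fun e _ => S.countable_witness N e
  have hindices : (S.indicesOn A).Countable := S.countable_indicesOn A.countable_toSet
  refine (mk_union_le _ _).trans (add_le_of_le hω (hwitness.le_aleph0.trans hω) ?_)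
  exact (mk_biUnion_le _ _).trans (mul_le_of_le hω (hindices.le_aleph0.trans hω)
    (ciSup_le' fun i => mk_initialSegment_max_omega0_le _ α))

theorem mk_below_le_of_forall_lt (h : ∀ β < α, #(S.stage β) ≤ max ℵ₀ β.card) :
    #(S.below α) ≤ max ℵ₀ α.card :=
  mk_biUnion_le_of_le (le_max_right _ _) (le_max_left _ _) _ fun β hβ =>
    (h β hβ).trans (max_le_max le_rfl (card_le_card hβ.le))

theorem mk_stage_le (α : Ordinal.{u}) : #(S.stage α) ≤ max ℵ₀ α.card := by
  induction α using WellFoundedLT.induction with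
  | ind α ih =>
    have hω : ℵ₀ ≤ max ℵ₀ α.card := le_max_left _ _
    rw [stage_eq]
    exact mk_finitaryClosure_le hω ((mk_union_le _ _).trans (add_le_of_le hω
      (S.mk_below_le_of_forall_lt ih) (mk_initialSegment_max_omega0_le _ α)))
      (S.mk_operation_le α _)

theorem mk_below_le (α : Ordinal.{u}) : #(S.below α) ≤ max ℵ₀ α.card :=
  S.mk_below_le_of_forall_lt fun β _ => S.mk_stage_le β

theorem witness_subset_stage {e : E} (he : e ∈ S.stage α) :
    S.witness (S.below α) e ⊆ S.stage α := by
  refine subset_trans ?_ (S.operation_subset_stage (A := {e}) (by simpa using he))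
  exact subset_union_of_subset_left (subset_biUnion_of_mem (Finset.mem_singleton_self e)) _

theorem initialSegment_cut_subset_stage {i : ι} (hi : i ∈ S.indicesOn (S.stage α)) :
    initialSegment (S.cut i) (max ω (α + 1)) ⊆ S.stage α := by
  classical
  simp only [indicesOn, mem_iUnion] at hi
  obtain ⟨a, ha, b, hb, hi⟩ := hi
  have hab : (({a, b} : Finset E) : Set E) ⊆ S.stage α := by simp [insert_subset_iff, ha, hb]
  refine subset_trans ?_ (S.operation_subset_stage hab)
  refine subset_union_of_subset_right (subset_biUnion_of_mem
    (u := fun i => initialSegment (S.cut i) (max ω (α + 1))) ?_) _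
  simp only [indicesOn, mem_iUnion]
  exact ⟨a, by simp, b, by simp, hi⟩

theorem exists_indicesOn_stage {i : ι} (hi : i ∈ S.indicesOn (S.below α)) :
    ∃ β < α, i ∈ S.indicesOn (S.stage β) := by
  simp only [indicesOn, below, mem_iUnion] at hi
  obtain ⟨a, ⟨β, hβ, ha⟩, b, ⟨γ, hγ, hb⟩, hi⟩ := hi
  refine ⟨max β γ, max_lt hβ hγ, ?_⟩
  simp only [indicesOn, mem_iUnion]
  exact ⟨a, S.stage_mono (le_max_left β γ) ha, b, S.stage_mono (le_max_right β γ) hb, hi⟩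

theorem indicesOn_mono : Monotone S.indicesOn := fun _ _ h =>
  (biUnion_mono h fun _ _ => biUnion_mono h fun _ _ => subset_rfl)

theorem cut_subset_below {i : ι} (hi : i ∈ S.indicesOn (S.below α))
    (hcut : #(S.cut i) ≤ max ℵ₀ α.card) : S.cut i ⊆ S.below α := by
  intro e he
  obtain ⟨β, hβ, hi⟩ := S.exists_indicesOn_stage hi
  obtain ⟨γ, hβγ, hγ, hrank⟩ :
      ∃ γ, β ≤ γ ∧ γ < α ∧ enumRank (S.cut i) e < max ω (γ + 1) := by
    rcases lt_max_iff.1 (enumRank_lt_max_omega0 hcut he) with h | h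
    · exact ⟨β, le_rfl, hβ, lt_max_of_lt_left h⟩
    · exact ⟨max β (enumRank _ e), le_max_left _ _, max_lt hβ h,
        lt_max_of_lt_right (Order.lt_add_one_iff.2 (le_max_right _ _))⟩
  exact S.stage_subset_below hγ (S.initialSegment_cut_subset_stage
    (S.indicesOn_mono (S.stage_mono hβγ) hi) ⟨he, hrank⟩)

theorem pairwise_disjoint_layer : Pairwise (Function.onFun Disjoint S.layer) :=
  (pairwise_disjoint_on S.layer).2 fun _ _ h =>
    disjoint_left.2 fun _ hα hβ => hβ.2 (S.stage_subset_below h hα.1)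

theorem biUnion_layer : ⋃ α < (#S.ground).ord, S.layer α = S.ground := by
  refine subset_antisymm (iUnion₂_subset fun α _ => sdiff_subset.trans (S.stage_subset_ground α))
    fun e he => ?_
  have hmem : e ∈ S.stage (enumRank S.ground e) :=
    S.below_union_initialSegment_subset_stage _
      (Or.inr ⟨he, lt_max_of_lt_right (Order.lt_add_one_iff.2 le_rfl)⟩)
  obtain ⟨α, hα, hmin⟩ := WellFounded.has_min wellFounded_lt {α | e ∈ S.stage α} ⟨_, hmem⟩
  have hlt : α < (#S.ground).ord := (not_lt.1 (hmin _ hmem)).trans_lt (enumRank_lt_ord he)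
  refine mem_biUnion (x := α) hlt ⟨hα, fun hbelow => ?_⟩
  obtain ⟨β, hβ, heβ⟩ := mem_iUnion₂.1 hbelow
  exact hmin β heβ hβ

theorem mk_layer_lt (hground : ℵ₀ < #S.ground) (hα : α < (#S.ground).ord) :
    #(S.layer α) < #S.ground :=
  ((mk_le_mk_of_subset sdiff_subset).trans (S.mk_stage_le α)).trans_lt
    (max_lt hground (lt_ord.1 hα))

end CutSystem

section CutControlled

variable {E ι : Type u}

/-- The sets in `𝒜` are pairwise disjoint with union `F`; the empty set may be one of them. -/
def IsDecomposition (𝒜 : Set (Set E)) (F : Set E) : Prop :=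
  𝒜.PairwiseDisjoint id ∧ ⋃₀ 𝒜 = F

theorem IsDecomposition.biUnion {𝒜 : Set (Set E)} {F : Set E} (h : IsDecomposition 𝒜 F)
    {ℬ : Set E → Set (Set E)} (hQ : ∀ P ∈ 𝒜, IsDecomposition (ℬ P) P) :
    IsDecomposition (⋃ P ∈ 𝒜, ℬ P) F := by
  constructor
  · refine PairwiseDisjoint.biUnion (fun P hP P' hP' hne => ?_) fun P hP => (hQ P hP).1
    simpa only [Function.onFun, id, iSup_eq_iUnion, ← sUnion_eq_biUnion, (hQ P hP).2,
      (hQ P' hP').2] using h.1 hP hP' hne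
  · rw [← h.2, sUnion_eq_biUnion (s := 𝒜)]
    simp only [sUnion_iUnion]
    exact iUnion₂_congr fun P hP => (hQ P hP).2

/-- A class `Good` of sets of edges to which the cut-closed chain construction applies. Here
`Conn i B` says that the edges in `B` provide the connection named by `i`, and `Q a b` consists of
the connections attached to the edges `a` and `b`. -/
structure IsCutControlled (Good : Set E → Prop) (Conn : ι → Set E → Prop)
    (Q : E → E → Set ι) : Prop where
  mono : ∀ i, Monotone (Conn i)
  countable_indices : ∀ a b, (Q a b).Countable
  sUnion : ∀ 𝒮 : Set (Set E), (∀ S ∈ 𝒮, Good S) → Good (⋃₀ 𝒮)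
  exists_countable : ∀ F, Good F → ∀ e ∈ F, ∃ W ⊆ F, e ∈ W ∧ W.Countable ∧ Good W
  sdiff : ∀ F N, Good F →
    (∀ a ∈ N, ∀ b ∈ N, ∀ i ∈ Q a b, Conn i (F \ N) → ∀ L : Set E, L.Finite →
      Conn i ((F \ N) \ L)) →
    Good (F \ N)

theorem exists_minimum_cut (p : Set E → Prop) (F : Set E) :
    ∃ K ⊆ F, ∀ L ⊆ F, ¬ p (F \ L) → ¬ p (F \ K) ∧ #K ≤ #L := by
  by_cases hcut : ∃ L, L ⊆ F ∧ ¬ p (F \ L)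
  · obtain ⟨K, ⟨hKF, hK⟩, hmin⟩ :=
      exists_minimalFor_of_wellFoundedLT _ (fun L : Set E => #L) hcut
    exact ⟨K, hKF, fun L hLF hL => ⟨hK, (le_total _ _).elim id (hmin ⟨hLF, hL⟩)⟩⟩
  · exact ⟨∅, empty_subset F, fun L hLF hL => (hcut ⟨L, hLF, hL⟩).elim⟩

namespace IsCutControlled

variable {Good : Set E → Prop} {Conn : ι → Set E → Prop} {Q : E → E → Set ι}

theorem exists_countable_witness (h : IsCutControlled Good Conn Q) (F N : Set E) (e : E) :
    ∃ W ⊆ F, W.Countable ∧ (Good (F \ N) → e ∈ F \ N → e ∈ W ∧ W ⊆ F \ N ∧ Good W) := by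
  by_cases hgood : Good (F \ N) ∧ e ∈ F \ N
  · obtain ⟨W, hWF, heW, hcount, hW⟩ := h.exists_countable _ hgood.1 e hgood.2
    exact ⟨W, hWF.trans sdiff_subset, hcount, fun _ _ => ⟨heW, hWF, hW⟩⟩
  · exact ⟨∅, empty_subset F, countable_empty, fun h₁ h₂ => (hgood ⟨h₁, h₂⟩).elim⟩

theorem good_ground_sdiff_below (h : IsCutControlled Good Conn Q) (S : CutSystem E ι)
    (hindices : S.indices = Q)
    (hcut : ∀ i, ∀ L ⊆ S.ground, ¬ Conn i (S.ground \ L) →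
      ¬ Conn i (S.ground \ S.cut i) ∧ #(S.cut i) ≤ #L)
    (hgood : Good S.ground) (α : Ordinal.{u}) : Good (S.ground \ S.below α) := by
  -- If a finite `L` destroyed a connection attached to `below α` that survives in
  -- `ground \ below α`, then its minimum cut would have at most `|below α ∪ L|` elements, hence
  -- lie inside `below α`, and the connection would not have survived.
  refine h.sdiff _ _ hgood fun a ha b hb i hi hconn L hL => ?_
  by_contra hsep
  have hsdiff : (S.ground \ S.below α) \ L = S.ground \ (S.below α ∪ L ∩ S.ground) := by
    rw [Set.sdiff_sdiff, ← sdiff_inter_self_eq_sdiff, union_inter_distrib_right,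
      inter_eq_left.2 (S.below_subset_ground α)]
  rw [hsdiff] at hsep
  obtain ⟨hnot, hle⟩ :=
    hcut i _ (union_subset (S.below_subset_ground α) inter_subset_right) hsep
  have hsmall : #(S.cut i) ≤ max ℵ₀ α.card :=
    hle.trans <| (mk_union_le _ _).trans <| add_le_of_le (le_max_left _ _) (S.mk_below_le α) <|
      (hL.subset inter_subset_left).countable.le_aleph0.trans (le_max_left _ _)
  have hi' : i ∈ S.indicesOn (S.below α) :=
    mem_biUnion ha (mem_biUnion hb (hindices ▸ hi))
  exact hnot (h.mono i (sdiff_subset_sdiff_right (S.cut_subset_below hi' hsmall)) hconn)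

theorem good_layer (h : IsCutControlled Good Conn Q) (S : CutSystem E ι) {α : Ordinal.{u}}
    (hwitness : ∀ e ∈ S.ground \ S.below α, e ∈ S.witness (S.below α) e ∧
      S.witness (S.below α) e ⊆ S.ground \ S.below α ∧ Good (S.witness (S.below α) e)) :
    Good (S.layer α) := by
  have hground : S.layer α ⊆ S.ground \ S.below α :=
    sdiff_subset_sdiff_left (S.stage_subset_ground α)
  have hlayer : S.layer α = ⋃₀ (S.witness (S.below α) '' S.layer α) := by
    refine subset_antisymm (fun e he => ?_) (sUnion_subset ?_)
    · exact ⟨_, mem_image_of_mem _ he, (hwitness e (hground he)).1⟩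
    · rintro _ ⟨e, he, rfl⟩ f hf
      exact ⟨S.witness_subset_stage he.1 hf, ((hwitness e (hground he)).2.1 hf).2⟩
  rw [hlayer]
  refine h.sUnion _ ?_
  rintro _ ⟨e, he, rfl⟩
  exact (hwitness e (hground he)).2.2

theorem exists_decomposition_lt (h : IsCutControlled Good Conn Q) {F : Set E} (hF : Good F)
    (huncountable : ℵ₀ < #F) :
    ∃ 𝒜, IsDecomposition 𝒜 F ∧ ∀ P ∈ 𝒜, #P < #F ∧ Good P := by
  choose K hKF hK using fun i => exists_minimum_cut (Conn i) F
  choose W hWF hWcount hW using h.exists_countable_witness F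
  let S : CutSystem E ι := ⟨F, K, hKF, Q, h.countable_indices, W, hWF, hWcount⟩
  refine ⟨S.layer '' Iio (#F).ord, ⟨?_, ?_⟩, ?_⟩
  · exact (S.pairwise_disjoint_layer.set_pairwise _).image
  · rw [sUnion_image]
    exact S.biUnion_layer
  · rintro _ ⟨α, hα, rfl⟩
    refine ⟨S.mk_layer_lt huncountable hα, h.good_layer S fun e he => ?_⟩
    exact hW _ e (h.good_ground_sdiff_below S rfl hK hF α) he

theorem exists_countable_decomposition (h : IsCutControlled Good Conn Q) {F : Set E}
    (hF : Good F) : ∃ 𝒜, IsDecomposition 𝒜 F ∧ ∀ P ∈ 𝒜, P.Countable ∧ Good P := by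
  induction hκ : #F using WellFoundedLT.induction generalizing F with
  | ind κ ih =>
    subst hκ
    rcases le_or_gt #F ℵ₀ with hcount | huncountable
    · refine ⟨{F}, ⟨pairwiseDisjoint_singleton _ _, sUnion_singleton F⟩, ?_⟩
      rintro _ rfl
      exact ⟨le_aleph0_iff_set_countable.1 hcount, hF⟩
    · obtain ⟨𝒜, hdecomp, h𝒜⟩ := h.exists_decomposition_lt hF huncountable
      choose! ℬ hℬ hgood using fun (P : Set E) (hP : P ∈ 𝒜) => ih #P (h𝒜 P hP).1 (h𝒜 P hP).2 rfl
      refine ⟨⋃ P ∈ 𝒜, ℬ P, hdecomp.biUnion hℬ, fun A hA => ?_⟩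
      obtain ⟨P, hP, hA⟩ := mem_iUnion₂.1 hA
      exact hgood P hP A hA

end IsCutControlled

end CutControlled

section StoppedReachable

variable {V : Type u} {z x y : V} {B C L : Set (Sym2 V)}

/-- The vertices `x` and `y` are joined by a walk with edges in `B` all of whose vertices, except
possibly the last one, differ from `z`. -/
def StoppedReachable (z : V) (B : Set (Sym2 V)) : V → V → Prop :=
  Relation.ReflTransGen fun a b => a ≠ z ∧ s(a, b) ∈ B

namespace StoppedReachable

theorem mono (h : StoppedReachable z B x y) (hBC : B ⊆ C) : StoppedReachable z C x y :=
  Relation.ReflTransGen.mono (fun _ _ hab => ⟨hab.1, hBC hab.2⟩) x y h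

theorem symm (h : StoppedReachable z B x y) (hy : y ≠ z) : StoppedReachable z B y x := by
  induction h with
  | refl => exact .refl
  | tail _ hbc ih => exact (ih hbc.1).head ⟨hy, Sym2.eq_swap ▸ hbc.2⟩

theorem exists_finite_subset (h : StoppedReachable z B x y) :
    ∃ P ⊆ B, P.Finite ∧ StoppedReachable z P x y := by
  induction h with
  | refl => exact ⟨∅, empty_subset B, finite_empty, .refl⟩
  | @tail b c _ hbc ih =>
    obtain ⟨P, hPB, hP, hreach⟩ := ih
    exact ⟨insert s(b, c) P, insert_subset hbc.2 hPB, hP.insert _,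
      (hreach.mono (subset_insert _ _)).tail ⟨hbc.1, mem_insert _ _⟩⟩

theorem sdiff_of_forall_mem (h : StoppedReachable z B x y) (hy : y ≠ z) (hL : ∀ f ∈ L, z ∈ f) :
    StoppedReachable z (B \ L) x y := by
  induction h with
  | refl => exact .refl
  | tail _ hbc ih =>
    refine (ih hbc.1).tail ⟨hbc.1, hbc.2, fun hmem => ?_⟩
    obtain rfl | rfl := Sym2.mem_iff.1 (hL _ hmem)
    exacts [hbc.1 rfl, hy rfl]

theorem sdiff_or_exists_endpoint (h : StoppedReachable z B x y) (N : Set (Sym2 V)) :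
    StoppedReachable z (B \ N) x y ∨
      ∃ u ≠ z, (∃ e ∈ N, u ∈ e) ∧ StoppedReachable z (B \ N) x u := by
  induction h using Relation.ReflTransGen.head_induction_on with
  | refl => exact .inl .refl
  | @head a c hac _ ih =>
    by_cases hN : s(a, c) ∈ N
    · exact .inr ⟨a, hac.1, ⟨_, hN, Sym2.mem_mk_left a c⟩, .refl⟩
    · have hstep : a ≠ z ∧ s(a, c) ∈ B \ N := ⟨hac.1, hac.2, hN⟩
      exact ih.imp (.head hstep) fun ⟨u, hu, hend, hcu⟩ => ⟨u, hu, hend, hcu.head hstep⟩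

end StoppedReachable

end StoppedReachable

section IsGoodAt

variable {V : Type u} {z x y : V} {F : Set (Sym2 V)}

/-- The property `GoodAtZ` of the graph with edge set `F`, expressed by deletions: the endpoints of
an edge `e` of `F` stay connected when `e` and finitely many edges at `z` are deleted. Stopping the
walks at `z` makes an edge `e` away from `z` a non-bridge of its component, and makes an edge `e`
at `z` one of infinitely many edges from its component to `z`. -/
def IsGoodAt (z : V) (F : Set (Sym2 V)) : Prop :=
  ∀ ⦃x y : V⦄, x ≠ z → s(x, y) ∈ F → ∀ L : Set (Sym2 V), L.Finite →
    (∀ f ∈ L, f = s(x, y) ∨ z ∈ f) → StoppedReachable z (F \ L) x y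

theorem finite_setOf_mk_mem {A : Set (Sym2 V)} (hA : A.Finite) :
    {p : V × V | s(p.1, p.2) ∈ A}.Finite := by
  refine Finite.preimage' hA fun e _ => ?_
  induction e with
  | h a b =>
    refine (toFinite {(a, b), (b, a)}).subset fun p hp => ?_
    simpa [Prod.ext_iff] using hp

theorem finite_setOf_mem (e : Sym2 V) : {v | v ∈ e}.Finite := by
  induction e with
  | h a b => exact (toFinite {a, b}).subset fun v hv => by simpa using hv

theorem IsGoodAt.sUnion {𝒮 : Set (Set (Sym2 V))} (h : ∀ S ∈ 𝒮, IsGoodAt z S) :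
    IsGoodAt z (⋃₀ 𝒮) := fun _ _ hx ⟨S, hS, he⟩ L hL hLz =>
  (h S hS hx he L hL hLz).mono (sdiff_subset_sdiff_left (subset_sUnion_of_mem hS))

theorem IsGoodAt.exists_finite_detour (h : IsGoodAt z F) (x y : V) (A : Finset (Sym2 V)) :
    ∃ P ⊆ F, P.Finite ∧ (x ≠ z → s(x, y) ∈ F → ∀ L ⊆ (A : Set (Sym2 V)),
      (∀ f ∈ L, f = s(x, y) ∨ z ∈ f) → StoppedReachable z (P \ L) x y) := by
  by_cases he : x ≠ z ∧ s(x, y) ∈ F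
  · obtain ⟨P, hPF, hP, hreach⟩ := (h he.1 he.2 {f ∈ A | f = s(x, y) ∨ z ∈ f}
      (A.finite_toSet.subset (sep_subset _ _)) fun f hf => hf.2).exists_finite_subset
    exact ⟨P, hPF.trans sdiff_subset, hP, fun _ _ L hLA hLz =>
      hreach.mono fun f hf => ⟨hf, fun hfL => (hPF hf).2 ⟨hLA hfL, hLz f hfL⟩⟩⟩
  · exact ⟨∅, empty_subset F, finite_empty, fun hx hxy => (he ⟨hx, hxy⟩).elim⟩

theorem IsGoodAt.exists_countable (h : IsGoodAt z F) {e : Sym2 V} (he : e ∈ F) :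
    ∃ W ⊆ F, e ∈ W ∧ W.Countable ∧ IsGoodAt z W := by
  choose P hPF hPfin hP using h.exists_finite_detour
  let D (A : Finset (Sym2 V)) : Set (Sym2 V) := ⋃ p ∈ {p : V × V | s(p.1, p.2) ∈ A}, P p.1 p.2 A
  have hD (A) : (D A).Countable :=
    ((finite_setOf_mk_mem A.finite_toSet).biUnion fun _ _ => hPfin _ _ A).countable
  have hWF : finitaryClosure D {e} ⊆ F :=
    finitaryClosure_min (singleton_subset_iff.2 he) fun A _ => iUnion₂_subset fun p _ => hPF _ _ A
  refine ⟨finitaryClosure D {e}, hWF, (finitaryClosure D).le_closure {e} rfl,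
    le_aleph0_iff_set_countable.1 (mk_finitaryClosure_le le_rfl
      (countable_singleton e).le_aleph0 fun A => (hD A).le_aleph0), ?_⟩
  intro x y hx hxy L hL hLz
  set W := finitaryClosure D {e}
  have hfin : (insert s(x, y) (L ∩ W)).Finite := (hL.subset inter_subset_left).insert _
  let A := hfin.toFinset
  have hAW : (A : Set (Sym2 V)) ⊆ W := by
    simpa [A, insert_subset_iff] using hxy
  have hPW : P x y A ⊆ W :=
    (subset_biUnion_of_mem (u := fun p : V × V => P p.1 p.2 A) (x := (x, y))
      (show s(x, y) ∈ A by simp [A])).trans (closedUnder_finitaryClosure D {e} A hAW)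
  have hLA : L ∩ W ⊆ (A : Set (Sym2 V)) := by simp [A]
  exact (hP x y A hx (hWF hxy) (L ∩ W) hLA fun f hf => hLz f hf.1).mono fun f hf =>
    ⟨hPW hf.1, fun hfL => hf.2 ⟨hfL, hPW hf.1⟩⟩

/-- The pairs of vertices between which connections matter for the edges `a` and `b`. The
second vertex may also be `z`, where walks stop. -/
def connectionPairs (z : V) (a b : Sym2 V) : Set (V × V) :=
  {v | v ∈ a} ×ˢ insert z {v | v ∈ b}

theorem countable_connectionPairs (z : V) (a b : Sym2 V) : (connectionPairs z a b).Countable :=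
  ((finite_setOf_mem a).prod ((finite_setOf_mem b).insert z)).countable

theorem IsGoodAt.sdiff {N : Set (Sym2 V)} (h : IsGoodAt z F)
    (hN : ∀ a ∈ N, ∀ b ∈ N, ∀ p ∈ connectionPairs z a b, StoppedReachable z (F \ N) p.1 p.2 →
      ∀ L : Set (Sym2 V), L.Finite → StoppedReachable z ((F \ N) \ L) p.1 p.2) :
    IsGoodAt z (F \ N) := by
  intro x y hx hxy L hL hLz
  have hcomm : (F \ N) \ L = (F \ L) \ N := Set.sdiff_sdiff_comm
  have hFL : StoppedReachable z (F \ L) x y := h hx hxy.1 L hL hLz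
  obtain hreach | ⟨u, hu, ⟨a, ha, hua⟩, hxu⟩ := hFL.sdiff_or_exists_endpoint N
  · exact hcomm ▸ hreach
  rw [← hcomm] at hxu
  have hux : StoppedReachable z (F \ N) u x := (hxu.mono sdiff_subset).symm hu
  have huy : StoppedReachable z (F \ N) u y := hux.tail ⟨hx, hxy⟩
  by_cases hy : y = z
  · subst hy
    exact hxu.trans (hN a ha a ha (u, y) ⟨hua, mem_insert _ _⟩ huy L hL)
  obtain hreach | ⟨w, hw, ⟨b, hb, hwb⟩, hyw⟩ := (hFL.symm hy).sdiff_or_exists_endpoint N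
  · exact hcomm ▸ hreach.symm hx
  rw [← hcomm] at hyw
  have huw : StoppedReachable z ((F \ N) \ L) u w :=
    hN a ha b hb (u, w) ⟨hua, mem_insert_of_mem _ hwb⟩ (huy.trans (hyw.mono sdiff_subset)) L hL
  exact (hxu.trans huw).trans (hyw.symm hw)

theorem isCutControlled_isGoodAt (z : V) :
    IsCutControlled (IsGoodAt z) (fun p B => StoppedReachable z B p.1 p.2) (connectionPairs z) where
  mono _ _ _ hBC h := h.mono hBC
  countable_indices := countable_connectionPairs z
  sUnion _ := IsGoodAt.sUnion
  exists_countable _ h _ := h.exists_countable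
  sdiff _ _ h := h.sdiff

end IsGoodAt

section GoodAtZ

variable {V : Type u} {G : SimpleGraph V} {z x y : V}
  {C : (G.induce ({z}ᶜ : Set V)).ConnectedComponent}

theorem ne_of_mem_compSet (hx : x ∈ G.compSet {z} C) : x ≠ z := by
  obtain ⟨v, -, rfl⟩ := hx
  exact v.2

theorem connected_induce_compSet (C : (G.induce ({z}ᶜ : Set V)).ConnectedComponent) :
    (G.induce (G.compSet {z} C)).Connected :=
  C.connected_toSimpleGraph.map ⟨fun v => ⟨v.1.1, v.1, v.2, rfl⟩, fun h => h⟩ <| by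
    rintro ⟨_, v, hv, rfl⟩
    exact ⟨⟨v, hv⟩, rfl⟩

theorem mem_compSet_of_adj (hx : x ∈ G.compSet {z} C) (hy : y ≠ z) (hxy : G.Adj x y) :
    y ∈ G.compSet {z} C := by
  obtain ⟨v, hv, rfl⟩ := hx
  exact ⟨⟨y, hy⟩, C.mem_supp_of_adj_mem_supp hv hxy, rfl⟩

theorem StoppedReachable.mem_compSet (hx : x ∈ G.compSet {z} C)
    (h : StoppedReachable z G.edgeSet x y) (hy : y ≠ z) : y ∈ G.compSet {z} C := by
  induction h with
  | refl => exact hx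
  | tail _ hbc ih => exact mem_compSet_of_adj (ih hbc.1) hy hbc.2

theorem stoppedReachable_of_reachable_induce {U : Set V} (hz : z ∉ U) {H : SimpleGraph U}
    {B : Set (Sym2 V)} (hB : ∀ a b : U, H.Adj a b → s(a.1, b.1) ∈ B) {a b : U}
    (h : H.Reachable a b) : StoppedReachable z B a b :=
  Relation.ReflTransGen.lift Subtype.val
    (fun a b hab => ⟨ne_of_mem_of_not_mem a.2 hz, hB a b hab⟩) a b
    ((H.reachable_iff_reflTransGen a b).1 h)

theorem stoppedReachable_of_mem_compSet (hx : x ∈ G.compSet {z} C) (hy : y ∈ G.compSet {z} C) :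
    StoppedReachable z G.edgeSet x y :=
  stoppedReachable_of_reachable_induce (fun hz => ne_of_mem_compSet hz rfl) (fun _ _ h => h)
    ((connected_induce_compSet C).preconnected ⟨x, hx⟩ ⟨y, hy⟩)

theorem StoppedReachable.reachable_deleteEdges_induce {a b : G.compSet {z} C}
    (h : StoppedReachable z (G.edgeSet \ {s(a.1, b.1)}) a b) :
    ((G.induce (G.compSet {z} C)).deleteEdges {s(a, b)}).Reachable a b := by
  suffices ∀ y, StoppedReachable z (G.edgeSet \ {s(a.1, b.1)}) a y → y ≠ z →
      ∃ hy : y ∈ G.compSet {z} C,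
        ((G.induce (G.compSet {z} C)).deleteEdges {s(a, b)}).Reachable a ⟨y, hy⟩ from
    (this b h (ne_of_mem_compSet b.2)).2
  intro y h hy
  induction h with
  | refl => exact ⟨a.2, .rfl⟩
  | @tail c d _ hcd ih =>
    obtain ⟨hc, hreach⟩ := ih hcd.1
    have hd : d ∈ G.compSet {z} C := mem_compSet_of_adj hc hy hcd.2.1
    refine ⟨hd, hreach.trans (SimpleGraph.Adj.reachable ?_)⟩
    refine SimpleGraph.deleteEdges_adj.2 ⟨hcd.2.1, fun heq => hcd.2.2 ?_⟩
    exact congrArg (Sym2.map Subtype.val) (mem_singleton_iff.1 heq)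

/-- The edges joining the component `C` of `G − z` to `z`. -/
def joiningEdges (C : (G.induce ({z}ᶜ : Set V)).ConnectedComponent) : Set (Sym2 V) :=
  {e | e ∈ G.edgeSet ∧ ∃ x ∈ G.compSet {z} C, e = s(x, z)}

theorem mk_mem_joiningEdges (hx : x ∈ G.compSet {z} C) (h : G.Adj x z) :
    s(x, z) ∈ joiningEdges C :=
  ⟨h, x, hx, rfl⟩

theorem isGoodAt_of_goodAtZ (h : G.GoodAtZ z) : IsGoodAt z G.edgeSet := by
  intro x y hx hxy L hL hLz
  let C := (G.induce ({z}ᶜ : Set V)).connectedComponentMk ⟨x, hx⟩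
  have hxC : x ∈ G.compSet {z} C := ⟨⟨x, hx⟩, rfl, rfl⟩
  obtain ⟨⟨-, hbridgeless⟩, hjoin⟩ := h C
  by_cases hy : y = z
  · subst hy
    have hinf : (joiningEdges C).Infinite :=
      hjoin.resolve_left (nonempty_iff_ne_empty.1 ⟨_, mk_mem_joiningEdges hxC hxy⟩)
    obtain ⟨_, ⟨hwz, w, hwC, rfl⟩, hwL⟩ := (hinf.sdiff hL).nonempty
    have hxw := (stoppedReachable_of_mem_compSet hxC hwC).sdiff_of_forall_mem
      (ne_of_mem_compSet hwC) (L := L) fun f hf => (hLz f hf).elim (· ▸ Sym2.mem_mk_right x y) id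
    exact hxw.tail ⟨ne_of_mem_compSet hwC, hwz, hwL⟩
  · have hyC : y ∈ G.compSet {z} C := mem_compSet_of_adj hxC hy hxy
    have hreach := (hbridgeless s(⟨x, hxC⟩, ⟨y, hyC⟩) hxy).preconnected ⟨x, hxC⟩ ⟨y, hyC⟩
    refine stoppedReachable_of_reachable_induce (fun hz => ne_of_mem_compSet hz rfl)
      (fun a b hab => ?_) hreach
    rw [SimpleGraph.deleteEdges_adj] at hab
    refine ⟨hab.1, fun habL => (hLz _ habL).elim (fun heq => hab.2 ?_) fun hz => ?_⟩
    · exact Sym2.map.injective Subtype.val_injective heq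
    · exact (Sym2.mem_iff.1 hz).elim (fun h => ne_of_mem_compSet a.2 h.symm)
        fun h => ne_of_mem_compSet b.2 h.symm

theorem IsGoodAt.twoEdgeConnected (h : IsGoodAt z G.edgeSet)
    (C : (G.induce ({z}ᶜ : Set V)).ConnectedComponent) :
    (G.induce (G.compSet {z} C)).TwoEdgeConnected := by
  refine ⟨connected_induce_compSet C, fun e he => ?_⟩
  induction e with
  | h a b =>
    refine (connected_induce_compSet C).connected_delete_edge_of_not_isBridge
      fun hbridge => SimpleGraph.isBridge_iff.1 hbridge ?_
    exact (h (ne_of_mem_compSet a.2) he {s(a.1, b.1)} (finite_singleton _)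
      fun f hf => .inl hf).reachable_deleteEdges_induce

theorem IsGoodAt.joiningEdges_eq_empty_or_infinite (h : IsGoodAt z G.edgeSet)
    (C : (G.induce ({z}ᶜ : Set V)).ConnectedComponent) :
    joiningEdges C = ∅ ∨ (joiningEdges C).Infinite := by
  by_contra! hfin
  obtain ⟨⟨_, hwz, w, hwC, rfl⟩, hfin⟩ := hfin
  have hw : w ≠ z := ne_of_mem_compSet hwC
  have hreach : StoppedReachable z (G.edgeSet \ joiningEdges C) w z := by
    refine h hw hwz _ hfin ?_
    rintro _ ⟨-, x, -, rfl⟩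
    exact .inr (Sym2.mem_mk_right x z)
  obtain heq | ⟨v, hwv, hv, hvz, hvC⟩ := Relation.ReflTransGen.cases_tail hreach
  · exact hw heq.symm
  · exact hvC (mk_mem_joiningEdges
      (StoppedReachable.mem_compSet hwC (StoppedReachable.mono hwv sdiff_subset) hv) hvz)

theorem goodAtZ_iff_isGoodAt : G.GoodAtZ z ↔ IsGoodAt z G.edgeSet :=
  ⟨isGoodAt_of_goodAtZ, fun h C => ⟨h.twoEdgeConnected C, h.joiningEdges_eq_empty_or_infinite C⟩⟩

theorem edgeSet_fromEdgeSet_of_subset {P : Set (Sym2 V)} (hP : P ⊆ G.edgeSet) :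
    (SimpleGraph.fromEdgeSet P).edgeSet = P := by
  rw [SimpleGraph.edgeSet_fromEdgeSet]
  exact sdiff_eq_left.2 (disjoint_left.2 fun e he => G.not_isDiag_of_mem_edgeSet (hP he))

end GoodAtZ

/-- If every connected component of `H − z` is 2-edge-connected and is joined to `z` by
zero or infinitely many edges, then `E(H)` can be partitioned into countable sets `E i`
such that each spanning subgraph `(V(H), E i)` has the same property. -/
theorem exists_countable_partition_goodAtZ {V : Type u} (H : SimpleGraph V) (z : V)
    (hH : H.GoodAtZ z) :
    ∃ (I : Type u) (E : I → Set (Sym2 V)),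
      (∀ i, (E i).Countable) ∧
      (∀ i j, i ≠ j → Disjoint (E i) (E j)) ∧
      (⋃ i, E i) = H.edgeSet ∧
      ∀ i, (SimpleGraph.fromEdgeSet (E i)).GoodAtZ z := by
  obtain ⟨𝒜, ⟨hdisjoint, hunion⟩, h𝒜⟩ :=
    (isCutControlled_isGoodAt z).exists_countable_decomposition (goodAtZ_iff_isGoodAt.1 hH)
  refine ⟨𝒜, Subtype.val, fun A => (h𝒜 A A.2).1, fun A B hne => ?_, ?_, fun A => ?_⟩
  · exact hdisjoint A.2 B.2 (Subtype.coe_injective.ne hne)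
  · rw [← sUnion_eq_iUnion, hunion]
  · have hAH : A.1 ⊆ H.edgeSet := hunion ▸ subset_sUnion_of_mem A.2
    rw [goodAtZ_iff_isGoodAt, edgeSet_fromEdgeSet_of_subset hAH]
    exact (h𝒜 A A.2).2
end

section
/- Let G be the subdivided infinite star: the graph with vertex set {c} ∪ {a_n : n ∈ ℕ} ∪ {b_n : n ∈ ℕ} (all vertices distinct) whose edges are exactly c a_n and a_n b_n for each n ∈ ℕ. Then G has no T-join for T = V(G), the entire vertex set. -/
namespace SimpleGraph

variable {V : Type*}

/-- A `T`-join in `G`: a set `P` of (oriented) paths, pairwise edge-disjoint, each with two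
distinct endpoints lying in `T`, such that every vertex of `T` is an endpoint of exactly one
path of `P`. -/
def IsTJoin (G : SimpleGraph V) (T : Set V) (P : Set (Σ u : V, Σ v : V, G.Walk u v)) : Prop :=
  (∀ p ∈ P, p.2.2.IsPath ∧ p.1 ≠ p.2.1 ∧ p.1 ∈ T ∧ p.2.1 ∈ T) ∧
  (∀ p ∈ P, ∀ q ∈ P, p ≠ q → ∀ e ∈ p.2.2.edges, e ∉ q.2.2.edges) ∧
  (∀ t ∈ T, ∃! p, p ∈ P ∧ (p.1 = t ∨ p.2.1 = t))

/-- `G` contains a `T`-join. -/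
def HasTJoin (G : SimpleGraph V) (T : Set V) : Prop := ∃ P, G.IsTJoin T P

end SimpleGraph

/-!
Put `Sₙ = {aₙ, bₙ}`. A single edge joins `Sₙ` to the rest of the graph, so at most one path of a
`T`-join has exactly one endpoint in `Sₙ`. All other paths ending in `Sₙ` pair up vertices of
`Sₙ`, so as `|Sₙ ∩ T|` is even there is no such exceptional path. But the path ending at `c` is
exceptional for the `Sₙ` which contains its other endpoint.
-/

open SimpleGraph

section TJoin

variable {V : Type*} {G M : SimpleGraph V} {S T : Set V} {P : Set (Σ u : V, Σ v : V, G.Walk u v)}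
  {c u u' v v' : V}

lemma exists_mem_edges_mem_edgeSet_between (w : G.Walk u v) (h : ¬(u ∈ S ↔ v ∈ S)) :
    ∃ e ∈ w.edges, e ∈ (G.between S Sᶜ).edgeSet := by
  by_cases hu : u ∈ S
  · obtain ⟨d, hd, hfst, hsnd⟩ := w.exists_boundary_dart S hu (by tauto)
    exact ⟨d.edge, List.mem_map_of_mem hd, d.adj, .inl ⟨hfst, hsnd⟩⟩
  · obtain ⟨d, hd, hfst, hsnd⟩ := w.exists_boundary_dart Sᶜ hu (not_not.2 (by tauto))
    exact ⟨d.edge, List.mem_map_of_mem hd, d.adj, .inr ⟨hfst, not_not.1 hsnd⟩⟩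

lemma odd_ncard_of_adj_notMem (hS : S.Finite) (hM : ∀ t ∈ S, ∃! w, M.Adj t w) (hu : u ∈ S)
    (hv : v ∉ S) (huv : M.Adj u v) (huniq : ∀ t ∈ S, ∀ w ∉ S, M.Adj t w → t = u) :
    Odd S.ncard := by
  let N : M.Subgraph := Subgraph.induce ⊤ (S \ {u})
  have hN : N.IsMatching := by
    rintro t ⟨htS, htu⟩
    obtain ⟨w, htw, hw⟩ := hM t htS
    have hwS : w ∈ S := by
      by_contra hwS
      exact htu (huniq t htS w hwS htw)
    have hwu : w ≠ u := by
      rintro rfl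
      exact hv ((hM w hu).unique huv htw.symm ▸ htS)
    exact ⟨w, ⟨⟨htS, htu⟩, ⟨hwS, hwu⟩, htw⟩, fun x hx ↦ hw x hx.2.2⟩
  have : Fintype N.verts := hS.sdiff.fintype
  have heven : Even (S \ {u}).ncard := Set.ncard_eq_toFinset_card' N.verts ▸ hN.even_card
  exact Set.ncard_sdiff_singleton_add_one hu hS ▸ heven.add_one

/-- The graph joining the two endpoints of each path in `P`. If `P` is a `T`-join, this graph is a
perfect matching on `T`, so parity arguments about `P` become statements about matchings. -/
def endpointGraph (P : Set (Σ u : V, Σ v : V, G.Walk u v)) : SimpleGraph V :=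
  fromEdgeSet {e | ∃ p ∈ P, s(p.1, p.2.1) = e}

lemma reachable_of_endpointGraph_adj (h : (endpointGraph P).Adj u v) : G.Reachable u v := by
  obtain ⟨⟨⟨x, y, w⟩, -, hends⟩, -⟩ := h
  obtain ⟨rfl, rfl⟩ | ⟨rfl, rfl⟩ := Sym2.eq_iff.1 hends
  exacts [w.reachable, w.reachable.symm]

lemma mem_of_endpointGraph_adj (hP : G.IsTJoin T P) (h : (endpointGraph P).Adj u v) : u ∈ T := by
  obtain ⟨⟨p, hp, hends⟩, -⟩ := h
  obtain ⟨-, -, hfst, hsnd⟩ := hP.1 p hp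
  obtain ⟨rfl, -⟩ | ⟨-, rfl⟩ := Sym2.eq_iff.1 hends
  exacts [hfst, hsnd]

lemma existsUnique_endpointGraph_adj (hP : G.IsTJoin T P) (hu : u ∈ T) :
    ∃! v, (endpointGraph P).Adj u v := by
  have hmem (p : Σ u : V, Σ v : V, G.Walk u v) :
      u ∈ s(p.1, p.2.1) ↔ p.1 = u ∨ p.2.1 = u := by
    simp only [Sym2.mem_iff, eq_comm]
  obtain ⟨p, ⟨hp, hup⟩, hpuniq⟩ := hP.2.2 u hu
  obtain ⟨v, hends⟩ := (hmem p).2 hup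
  have huv : u ≠ v := by
    rintro rfl
    exact (hP.1 p hp).2.1 (Sym2.mk_isDiag_iff.1 (hends ▸ Sym2.diag_isDiag u))
  refine ⟨v, ⟨⟨p, hp, hends⟩, huv⟩, ?_⟩
  rintro w ⟨⟨q, hq, hqends⟩, -⟩
  obtain rfl : q = p := hpuniq q ⟨hq, (hmem q).1 (hqends ▸ Sym2.mem_mk_left u w)⟩
  exact Sym2.congr_right.1 (hqends.symm.trans hends)

lemma exists_cut_edge_of_endpointGraph_adj (h : (endpointGraph P).Adj u v) (hu : u ∈ S)
    (hv : v ∉ S) :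
    ∃ p ∈ P, s(p.1, p.2.1) = s(u, v) ∧ ∃ e ∈ p.2.2.edges, e ∈ (G.between S Sᶜ).edgeSet := by
  obtain ⟨⟨p, hp, hends⟩, -⟩ := h
  refine ⟨p, hp, hends, exists_mem_edges_mem_edgeSet_between p.2.2 ?_⟩
  obtain ⟨rfl, rfl⟩ | ⟨rfl, rfl⟩ := Sym2.eq_iff.1 hends <;> tauto

lemma eq_of_endpointGraph_adj_of_subsingleton_cut (hP : G.IsTJoin T P)
    (hcut : (G.between S Sᶜ).edgeSet.Subsingleton) (h : (endpointGraph P).Adj u v)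
    (h' : (endpointGraph P).Adj u' v') (hu : u ∈ S) (hv : v ∉ S) (hu' : u' ∈ S) (hv' : v' ∉ S) :
    u = u' := by
  obtain ⟨p, hp, hends, e, hep, he⟩ := exists_cut_edge_of_endpointGraph_adj h hu hv
  obtain ⟨q, hq, hends', e', heq, he'⟩ := exists_cut_edge_of_endpointGraph_adj h' hu' hv'
  obtain rfl : e = e' := hcut he he'
  obtain rfl : p = q := by
    by_contra hpq
    exact hP.2.1 p hp q hq hpq e hep heq
  obtain ⟨rfl, -⟩ | ⟨rfl, -⟩ := Sym2.eq_iff.1 (hends.symm.trans hends')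
  exacts [rfl, absurd hu hv']

theorem mem_of_endpointGraph_adj_of_even (hP : G.IsTJoin T P)
    (hcut : (G.between S Sᶜ).edgeSet.Subsingleton) (hfin : (S ∩ T).Finite)
    (heven : Even (S ∩ T).ncard) (h : (endpointGraph P).Adj u v) (hu : u ∈ S) : v ∈ S := by
  by_contra hv
  have hodd : Odd (S ∩ T).ncard :=
    odd_ncard_of_adj_notMem hfin (fun t ht ↦ existsUnique_endpointGraph_adj hP ht.2)
      ⟨hu, mem_of_endpointGraph_adj hP h⟩ (fun hvST ↦ hv hvST.1) h fun t ht w hw htw ↦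
        eq_of_endpointGraph_adj_of_subsingleton_cut hP hcut htw h ht.1
          (fun hwS ↦ hw ⟨hwS, mem_of_endpointGraph_adj hP htw.symm⟩) hu hv
  exact Nat.not_even_iff_odd.2 hodd heven

theorem not_hasTJoin_of_forall_exists_even_cut (hc : c ∈ T)
    (hcut : ∀ v, G.Reachable c v → v ≠ c → ∃ S : Set V, v ∈ S ∧ c ∉ S ∧
      (G.between S Sᶜ).edgeSet.Subsingleton ∧ (S ∩ T).Finite ∧ Even (S ∩ T).ncard) :
    ¬ G.HasTJoin T := by
  rintro ⟨P, hP⟩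
  obtain ⟨v, hcv, -⟩ := existsUnique_endpointGraph_adj hP hc
  obtain ⟨S, hvS, hcS, hSubsingleton, hfin, heven⟩ :=
    hcut v (reachable_of_endpointGraph_adj hcv) hcv.ne'
  exact hcS (mem_of_endpointGraph_adj_of_even hP hSubsingleton hfin heven hcv.symm hvS)

end TJoin

section SubdividedStar

variable {V ι : Type*} {G : SimpleGraph V} {T : Set V} {c : V} {a b : ι → V}

lemma subsingleton_edgeSet_between_pair (ha : Function.Injective a) (hb : Function.Injective b)
    (hab : ∀ m n, a m ≠ b n) (hca : ∀ n, c ≠ a n) (hcb : ∀ n, c ≠ b n)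
    (hadj : ∀ u v : V, G.Adj u v → ∃ n,
      (u = c ∧ v = a n) ∨ (v = c ∧ u = a n) ∨
      (u = a n ∧ v = b n) ∨ (v = a n ∧ u = b n)) (n : ι) :
    (G.between {a n, b n} {a n, b n}ᶜ).edgeSet.Subsingleton := by
  have hout : ∀ u ∈ ({a n, b n} : Set V), ∀ v ∉ ({a n, b n} : Set V), G.Adj u v →
      s(u, v) = s(c, a n) := by
    intro u hu v hv huv
    simp only [Set.mem_insert_iff, Set.mem_singleton_iff] at hu hv
    obtain ⟨m, ⟨rfl, rfl⟩ | ⟨rfl, rfl⟩ | ⟨rfl, rfl⟩ | ⟨rfl, rfl⟩⟩ := hadj u v huv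
    · exact absurd hu (not_or.2 ⟨hca n, hcb n⟩)
    · rw [hu.resolve_right (hab m n), Sym2.eq_swap]
    · obtain rfl := ha (hu.resolve_right (hab m n))
      exact absurd (.inr rfl) hv
    · obtain rfl := hb (hu.resolve_left (hab n m).symm)
      exact absurd (.inl rfl) hv
  have heq : ∀ e ∈ (G.between {a n, b n} {a n, b n}ᶜ).edgeSet, e = s(c, a n) := by
    rintro ⟨u, v⟩ ⟨huv, ⟨hu, hv⟩ | ⟨hu, hv⟩⟩
    · exact hout u hu v hv huv
    · exact Sym2.eq_swap.trans (hout v hv u hu huv.symm)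
  exact fun e he e' he' ↦ (heq e he).trans (heq e' he').symm

lemma even_ncard_pair_inter {x y : V} (hxy : x ≠ y) (hT : x ∈ T ↔ y ∈ T) :
    Even (({x, y} : Set V) ∩ T).ncard := by
  by_cases hy : y ∈ T
  · rw [Set.inter_eq_left.2 (Set.pair_subset (hT.2 hy) hy), Set.ncard_pair hxy]
    exact even_two
  · simp [Set.insert_inter_of_notMem (mt hT.1 hy), hy]

theorem subdivided_star_no_tJoin_general (ha : Function.Injective a) (hb : Function.Injective b)
    (hab : ∀ m n, a m ≠ b n) (hca : ∀ n, c ≠ a n) (hcb : ∀ n, c ≠ b n)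
    (hadj : ∀ u v : V, G.Adj u v → ∃ n,
      (u = c ∧ v = a n) ∨ (v = c ∧ u = a n) ∨
      (u = a n ∧ v = b n) ∨ (v = a n ∧ u = b n))
    (hcT : c ∈ T) (hT : ∀ n, a n ∈ T ↔ b n ∈ T) :
    ¬ G.HasTJoin T := by
  refine not_hasTJoin_of_forall_exists_even_cut hcT fun v hcv hvc ↦ ?_
  obtain ⟨w, hvw⟩ : ∃ w, G.Adj v w := by
    obtain ⟨p⟩ := hcv.symm
    obtain ⟨w, hvw, -⟩ := p.exists_eq_cons_of_ne hvc
    exact ⟨w, hvw⟩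
  obtain ⟨n, hn⟩ : ∃ n, v ∈ ({a n, b n} : Set V) := by
    obtain ⟨n, ⟨h, -⟩ | ⟨-, h⟩ | ⟨h, -⟩ | ⟨-, h⟩⟩ := hadj v w hvw
    exacts [absurd h hvc, ⟨n, .inl h⟩, ⟨n, .inl h⟩, ⟨n, .inr h⟩]
  exact ⟨{a n, b n}, hn, not_or.2 ⟨hca n, hcb n⟩,
    subsingleton_edgeSet_between_pair ha hb hab hca hcb hadj n, (Set.toFinite _).inter_of_left T,
    even_ncard_pair_inter (hab n n) (hT n)⟩

end SubdividedStar

/-- The subdivided infinite star (center `c`, with edges `c aₙ` and `aₙ bₙ` for `n ∈ ℕ`)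
has no `T`-join for `T` the entire vertex set. -/
theorem subdivided_star_no_tJoin {V : Type*} (G : SimpleGraph V) (c : V) (a b : ℕ → V)
    (ha : Function.Injective a) (hb : Function.Injective b)
    (hab : ∀ m n, a m ≠ b n) (hca : ∀ n, c ≠ a n) (hcb : ∀ n, c ≠ b n)
    (hvert : ∀ v : V, v = c ∨ (∃ n, v = a n) ∨ (∃ n, v = b n))
    (hadj : ∀ u v : V, G.Adj u v ↔ ∃ n,
      (u = c ∧ v = a n) ∨ (v = c ∧ u = a n) ∨
      (u = a n ∧ v = b n) ∨ (v = a n ∧ u = b n)) :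
    ¬ G.HasTJoin Set.univ :=
  subdivided_star_no_tJoin_general ha hb hab hca hcb (fun u v ↦ (hadj u v).1)
    (Set.mem_univ c) fun n ↦ iff_of_true (Set.mem_univ (a n)) (Set.mem_univ (b n))
end
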